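/- arXiv:1803.06586 — 7 statements merged into one kernel-verified Lean document; each statement's English description precedes it below -/
import Mathlib

section
/- Let d, t ≥ 1, let Φ be a real t × d matrix, y ∈ ℝ^t, v ∈ ℝ^d, and β, σ₀ > 0. Define K = Φ·Φᵀ ∈ ℝ^{t×t}, κ = Φ·v ∈ ℝ^t, Σ_o = ( (1/(2σ₀²β))·I_t + K )⁻¹, Σ̂ = (2β·ΦᵀΦ + (1/σ₀²)·I_d)⁻¹, and μ̂ = 2β·Σ̂·Φᵀ·y. Then vᵀ·μ̂ = 2σ₀²β · κᵀ·(I_t − Σ_o·K)·y. -/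
open Matrix

/-! With `λ = 1 / (2σ₀²β)`, the ratio of the prior precision `1 / σ₀²` to the noise precision `2β`,
one has `2β Σ̂ = (λ + ΦᵀΦ)⁻¹`. The push-through identity `(λ + ΦᵀΦ)⁻¹ Φᵀ = Φᵀ (λ + ΦΦᵀ)⁻¹` moves the
inverse from feature space to sample space, and `λ (λ + K)⁻¹ = 1 - (λ + K)⁻¹ K`. -/

section CommRing

variable {m n R : Type*} [Fintype m] [DecidableEq m] [Fintype n] [DecidableEq n] [CommRing R]

theorem isUnit_det_smul_one_add_mul_comm {a : R} (ha : IsUnit a)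
    (U : Matrix m n R) (V : Matrix n m R) :
    IsUnit (a • 1 + U * V).det ↔ IsUnit (a • 1 + V * U).det := by
  obtain ⟨a, rfl⟩ := ha
  have factor_left : (a : R) • 1 + U * V = (a : R) • (1 + ((↑a⁻¹ : R) • U) * V) := by
    simp [smul_smul]
  have factor_right : (a : R) • 1 + V * U = (a : R) • (1 + V * ((↑a⁻¹ : R) • U)) := by
    simp [smul_smul]
  rw [factor_left, factor_right, det_smul, det_smul, det_one_add_mul_comm,
    IsUnit.mul_iff, IsUnit.mul_iff, and_iff_right (a.isUnit.pow _), and_iff_right (a.isUnit.pow _)]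

theorem inv_mul_eq_mul_inv_of_mul_eq_mul {X : Matrix n n R} {V : Matrix n m R} {Y : Matrix m m R}
    (hdet : IsUnit Y.det ↔ IsUnit X.det) (h : X * V = V * Y) : X⁻¹ * V = V * Y⁻¹ := by
  by_cases hY : IsUnit Y.det
  · calc
      X⁻¹ * V = X⁻¹ * (V * Y) * Y⁻¹ := by
        rw [Matrix.mul_assoc, mul_nonsing_inv_cancel_right _ _ hY]
      _ = V * Y⁻¹ := by rw [← h, nonsing_inv_mul_cancel_left _ _ (hdet.mp hY)]
  · -- A singular matrix has inverse `0`, so both sides vanish.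
    rw [nonsing_inv_apply_not_isUnit _ hY, nonsing_inv_apply_not_isUnit _ (hdet.not.mp hY),
      Matrix.zero_mul, Matrix.mul_zero]

theorem inv_smul_one_add_mul_mul {a : R} (ha : IsUnit a) (U : Matrix m n R) (V : Matrix n m R) :
    (a • 1 + V * U)⁻¹ * V = V * (a • 1 + U * V)⁻¹ :=
  inv_mul_eq_mul_inv_of_mul_eq_mul (isUnit_det_smul_one_add_mul_comm ha U V) <| by
    simp only [Matrix.add_mul, Matrix.mul_add, Matrix.smul_mul, Matrix.mul_smul, Matrix.one_mul,
      Matrix.mul_one, Matrix.mul_assoc]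

theorem one_sub_inv_add_mul_right {A B : Matrix m m R} (h : IsUnit (A + B).det) :
    1 - (A + B)⁻¹ * B = (A + B)⁻¹ * A := by
  rw [sub_eq_iff_eq_add, ← Matrix.mul_add, nonsing_inv_mul _ h]

end CommRing

theorem posDef_smul_one_add_mul_conjTranspose {m n R : Type*} [Finite m] [DecidableEq m]
    [Fintype n] [CommRing R] [PartialOrder R] [StarRing R] [StarOrderedRing R]
    [NoZeroDivisors R] (A : Matrix m n R) {a : R} (ha : 0 < a) :
    (a • 1 + A * Aᴴ).PosDef :=
  have : Nontrivial R := nontrivial_of_lt 0 a ha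
  (PosDef.one.smul ha).add_posSemidef (posSemidef_self_mul_conjTranspose A)

section Field

variable {m n 𝕜 : Type*} [Fintype m] [DecidableEq m] [Fintype n] [DecidableEq n] [Field 𝕜]

theorem smul_inv_smul_mul_add_smul_one_mul {b c : 𝕜} (hb : b ≠ 0) (hc : c ≠ 0)
    (U : Matrix m n 𝕜) (V : Matrix n m 𝕜) (hdet : IsUnit (c • 1 + U * V).det) :
    b • ((b • (V * U) + (b * c) • 1)⁻¹ * V) =
      c⁻¹ • (V * (1 - (c • 1 + U * V)⁻¹ * (U * V))) := by
  have hdet' : IsUnit (c • 1 + V * U).det :=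
    (isUnit_det_smul_one_add_mul_comm hc.isUnit U V).mp hdet
  have rescale : b • (V * U) + (b * c) • 1 = Units.mk0 b hb • (c • 1 + V * U) := by
    rw [Units.smul_mk0, smul_add, smul_smul, add_comm]
  calc
    b • ((b • (V * U) + (b * c) • 1)⁻¹ * V) = (c • 1 + V * U)⁻¹ * V := by
      rw [rescale, inv_smul' _ _ hdet', ← Matrix.smul_mul, ← Units.smul_mk0 hb, smul_inv_smul]
    _ = V * (c • 1 + U * V)⁻¹ := inv_smul_one_add_mul_mul hc.isUnit U V
    _ = c⁻¹ • (V * (1 - (c • 1 + U * V)⁻¹ * (U * V))) := by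
      rw [one_sub_inv_add_mul_right hdet, Matrix.mul_smul, Matrix.mul_one, Matrix.mul_smul,
        inv_smul_smul₀ hc]

theorem stmt_7_general [NeZero (2 : 𝕜)] (Φ : Matrix m n 𝕜) (y : m → 𝕜) (v : n → 𝕜) {β σ₀ : 𝕜}
    (hβ : β ≠ 0) (hσ : σ₀ ≠ 0) (hdet : IsUnit ((1 / (2 * σ₀ ^ 2 * β)) • 1 + Φ * Φᵀ).det) :
    v ⬝ᵥ ((2 * β) • ((2 * β) • (Φᵀ * Φ) + (1 / σ₀ ^ 2) • 1)⁻¹ *ᵥ (Φᵀ *ᵥ y)) =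
      2 * σ₀ ^ 2 * β *
        ((Φ *ᵥ v) ⬝ᵥ ((1 - ((1 / (2 * σ₀ ^ 2 * β)) • 1 + Φ * Φᵀ)⁻¹ * (Φ * Φᵀ)) *ᵥ y)) := by
  have hb : 2 * β ≠ 0 := mul_ne_zero two_ne_zero hβ
  have hc : 1 / (2 * σ₀ ^ 2 * β) ≠ 0 := by simp [hβ, hσ, two_ne_zero]
  have prior_precision : 1 / σ₀ ^ 2 = 2 * β * (1 / (2 * σ₀ ^ 2 * β)) := by field_simp
  rw [mulVec_mulVec, ← smul_mulVec, prior_precision,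
    smul_inv_smul_mul_add_smul_one_mul hb hc Φ Φᵀ hdet, inv_div, div_one, smul_mulVec,
    dotProduct_smul, smul_eq_mul, ← mulVec_mulVec, dotProduct_mulVec, vecMul_transpose]

end Field

/-- Kernelized posterior mean: the posterior mean of the prediction `⟨w, v⟩` under the
Gaussian posterior `N(μ̂, Σ̂)` can be written purely in terms of inner products, as
`vᵀ μ̂ = 2σ₀²β · κᵀ (I_t − Σ_o K) y` where `K = ΦΦᵀ`, `κ = Φv`, and
`Σ_o = ((2σ₀²β)⁻¹ I_t + K)⁻¹`. -/
theorem stmt_7 (d t : ℕ) (hd : 1 ≤ d) (ht : 1 ≤ t)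
    (Φ : Matrix (Fin t) (Fin d) ℝ) (y : Fin t → ℝ) (v : Fin d → ℝ)
    (β σ₀ : ℝ) (hβ : 0 < β) (hσ : 0 < σ₀)
    (K : Matrix (Fin t) (Fin t) ℝ) (hK : K = Φ * Φᵀ)
    (κ : Fin t → ℝ) (hκ : κ = Φ.mulVec v)
    (So : Matrix (Fin t) (Fin t) ℝ)
    (hSo : So = ((1 / (2 * σ₀ ^ 2 * β)) • (1 : Matrix (Fin t) (Fin t) ℝ) + K)⁻¹)
    (Sigmahat : Matrix (Fin d) (Fin d) ℝ)
    (hSigmahat : Sigmahat =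
      ((2 * β) • (Φᵀ * Φ) + (1 / σ₀ ^ 2) • (1 : Matrix (Fin d) (Fin d) ℝ))⁻¹)
    (muhat : Fin d → ℝ) (hmuhat : muhat = (2 * β) • Sigmahat.mulVec (Φᵀ.mulVec y)) :
    v ⬝ᵥ muhat = 2 * σ₀ ^ 2 * β * (κ ⬝ᵥ ((1 - So * K).mulVec y)) := by
  subst hK hκ hSo hSigmahat hmuhat
  exact stmt_7_general Φ y v hβ.ne' hσ.ne'
    (posDef_smul_one_add_mul_conjTranspose Φ (by positivity)).det_pos.ne'.isUnit
end

section
/- Let d, t ≥ 1, let Φ be a real t × d matrix, v ∈ ℝ^d, and β, σ₀ > 0. Define K = Φ·Φᵀ ∈ ℝ^{t×t}, κ = Φ·v ∈ ℝ^t, and Σ_o = ( (1/(2σ₀²β))·I_t + K )⁻¹. Then vᵀ·(2β·ΦᵀΦ + (1/σ₀²)·I_d)⁻¹·v = σ₀² · ( vᵀ·v − κᵀ·Σ_o·κ ). -/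
open Matrix

/-!
By the Woodbury identity, `(1 + a ΦᴴΦ)⁻¹ = 1 - Φᴴ (a⁻¹ + ΦΦᴴ)⁻¹ Φ`. With `a = 2σ₀²β` the posterior
covariance is `σ₀² (1 + a ΦᴴΦ)⁻¹`, and in its bilinear form the outer factors `Φᴴ` and `Φ` are
absorbed into the vectors.
-/

section Woodbury

variable {m n R : Type*} [Fintype m] [DecidableEq m] [Fintype n] [DecidableEq n] [CommRing R]

lemma inv_one_add_smul_mul_eq_sub (a : Rˣ) (U : Matrix n m R) (V : Matrix m n R)
    (h : IsUnit (1 + a • (V * U))) :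
    (1 + a • (U * V))⁻¹ = 1 - U * (a⁻¹ • (1 : Matrix m m R) + V * U)⁻¹ * V := by
  have hC : IsUnit (a • (1 : Matrix m m R)) := isUnit_one.smul a
  have hC_inv : (a • (1 : Matrix m m R))⁻¹ = a⁻¹ • 1 := by
    rw [inv_smul' 1 a (by simp), inv_one]
  have hVU : IsUnit (a⁻¹ • (1 : Matrix m m R) + V * U) := by
    simpa only [smul_add, inv_smul_smul] using h.smul a⁻¹
  simpa [hC_inv] using add_mul_mul_inv_eq_sub 1 U (a • 1) V isUnit_one hC (by simpa [hC_inv])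

end Woodbury

section StarOrderedField

variable {m n K : Type*} [DecidableEq m] [Fintype n]
  [Field K] [PartialOrder K] [StarRing K] [StarOrderedRing K]

lemma posDef_one_add_smul_self_mul_conjTranspose [Finite m] (A : Matrix m n K) {a : K}
    (ha : 0 ≤ a) : (1 + a • (A * Aᴴ)).PosDef :=
  PosDef.one.add_posSemidef ((posSemidef_self_mul_conjTranspose A).smul ha)

variable [Fintype m] [DecidableEq n]

lemma inv_smul_conjTranspose_mul_self_add_inv_smul_one (A : Matrix m n K) {a s : K}
    (ha : 0 < a) (hs : 0 < s) :
    (a • (Aᴴ * A) + s⁻¹ • (1 : Matrix n n K))⁻¹ =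
      s • (1 - Aᴴ * ((s * a)⁻¹ • (1 : Matrix m m K) + A * Aᴴ)⁻¹ * A) := by
  have hsa : 0 < s * a := mul_pos hs ha
  have hdet : IsUnit (1 + (s * a) • (Aᴴ * A)).det := by
    simpa using (isUnit_iff_isUnit_det _).1
      (posDef_one_add_smul_self_mul_conjTranspose Aᴴ hsa.le).isUnit
  have woodbury := inv_one_add_smul_mul_eq_sub (Units.mk0 (s * a) hsa.ne') Aᴴ A
    (posDef_one_add_smul_self_mul_conjTranspose A hsa.le).isUnit
  calc (a • (Aᴴ * A) + s⁻¹ • (1 : Matrix n n K))⁻¹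
      = (s⁻¹ • (1 + (s * a) • (Aᴴ * A)))⁻¹ := by
        rw [smul_add, smul_smul, inv_mul_cancel_left₀ hs.ne', add_comm]
    _ = s • (1 + (s * a) • (Aᴴ * A))⁻¹ := by
        simpa only [Units.smul_def, Units.val_inv_eq_inv_val, Units.val_mk0, inv_inv] using
          inv_smul' _ (Units.mk0 s hs.ne')⁻¹ hdet
    _ = s • (1 - Aᴴ * ((s * a)⁻¹ • (1 : Matrix m m K) + A * Aᴴ)⁻¹ * A) :=
        congrArg (s • ·) woodbury

theorem stmt_8_general (Φ : Matrix m n K) (u v : n → K) {β σ₀ : K} (hβ : 0 < β) (hσ : 0 < σ₀) :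
    star u ⬝ᵥ (((2 * β) • (Φᴴ * Φ) + (1 / σ₀ ^ 2) • (1 : Matrix n n K))⁻¹ *ᵥ v) =
      σ₀ ^ 2 * (star u ⬝ᵥ v - star (Φ *ᵥ u) ⬝ᵥ
        (((1 / (2 * σ₀ ^ 2 * β)) • (1 : Matrix m m K) + Φ * Φᴴ)⁻¹ *ᵥ (Φ *ᵥ v))) := by
  have hcov := inv_smul_conjTranspose_mul_self_add_inv_smul_one Φ
    (mul_pos two_pos hβ) (pow_pos hσ 2)
  have hscale : σ₀ ^ 2 * (2 * β) = 2 * σ₀ ^ 2 * β := by ring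
  have hsandwich (S : Matrix m m K) :
      star u ⬝ᵥ ((Φᴴ * S * Φ) *ᵥ v) = star (Φ *ᵥ u) ⬝ᵥ (S *ᵥ (Φ *ᵥ v)) := by
    rw [star_mulVec, ← mulVec_mulVec, ← mulVec_mulVec, dotProduct_mulVec]
  rw [one_div, one_div, hcov, hscale, smul_mulVec, dotProduct_smul, smul_eq_mul, sub_mulVec,
    one_mulVec, dotProduct_sub, hsandwich]

end StarOrderedField

/-- Kernelized posterior variance: the posterior variance of the prediction `⟨w, v⟩`
under the Gaussian posterior with covariance `Σ̂ = (2β ΦᵀΦ + σ₀⁻² I_d)⁻¹` equals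
`σ₀² (vᵀv − κᵀ Σ_o κ)` where `K = ΦΦᵀ`, `κ = Φv`, and `Σ_o = ((2σ₀²β)⁻¹ I_t + K)⁻¹`. -/
theorem stmt_8 (d t : ℕ) (hd : 1 ≤ d) (ht : 1 ≤ t)
    (Φ : Matrix (Fin t) (Fin d) ℝ) (v : Fin d → ℝ)
    (β σ₀ : ℝ) (hβ : 0 < β) (hσ : 0 < σ₀)
    (K : Matrix (Fin t) (Fin t) ℝ) (hK : K = Φ * Φᵀ)
    (κ : Fin t → ℝ) (hκ : κ = Φ.mulVec v)
    (So : Matrix (Fin t) (Fin t) ℝ)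
    (hSo : So = ((1 / (2 * σ₀ ^ 2 * β)) • (1 : Matrix (Fin t) (Fin t) ℝ) + K)⁻¹) :
    v ⬝ᵥ (((2 * β) • (Φᵀ * Φ) + (1 / σ₀ ^ 2) • (1 : Matrix (Fin d) (Fin d) ℝ))⁻¹.mulVec v) =
      σ₀ ^ 2 * (v ⬝ᵥ v - κ ⬝ᵥ So.mulVec κ) := by
  subst hK hκ hSo
  simpa using stmt_8_general Φ v v hβ hσ
end

section
/- Let G be a finite nonempty set, π a probability mass function on G with π(g*) > 0 for a fixed g* ∈ G, Y a finite set, and v : G → ℝ^d the prediction of each structure on a fixed atomic question. Let ℓ : ℝ^d × Y → ℝ be a loss function with 0 ≤ ℓ(z,y) ≤ B and |ℓ(z,y) − ℓ(z',y)| ≤ C·‖z − z'‖ for all relevant z, z', y, for constants B, C > 0. Let η be a probability mass function on Y, define L(z) = Σ_y η(y)·ℓ(z,y), and suppose there exists λ > 0 such that L(v(g)) − L(v(g*)) ≥ λ·‖v(g) − v(g*)‖² for all g ∈ G. Suppose the variance Σ_g π(g)·‖v(g) − Σ_{g'} π(g')·v(g')‖² is at least γ ≥ 0. For each y ∈ Y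 define π_y(g) = π(g)·exp(−β·ℓ(v(g), y)) / Z_y with Z_y = Σ_h π(h)·exp(−β·ℓ(v(h), y)). If 0 < β ≤ min(λ/(2C²), 1/B), then Σ_{y} η(y)·(1/π_y(g*)) ≤ (1 − β·γ·λ/2)·(1/π(g*)). -/
/-!
Dividing by the target's weight gives `1 / π_y(g*) = (∑ h, π h * exp (-β * D_h(y))) / π g*`, where
`D_h` is the excess loss of `h` over `g*`. Since `exp x ≤ 1 + x + x ^ 2` for `|x| ≤ 1`, averaging
over the answer turns the linear term into `-β * E[D_h] ≤ -β * λ * ‖v h - v g*‖ ^ 2`, while the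
Lipschitz bound makes the quadratic term at most `β ^ 2 * C ^ 2 * ‖v h - v g*‖ ^ 2`; for
`β ≤ λ / (2 * C ^ 2)` this is at most half of the linear gain. The remaining gain
`(β * λ / 2) * ‖v h - v g*‖ ^ 2`, averaged over the prior `π`, is at least `β * λ / 2` times the
variance, because the mean minimizes the mean squared deviation.
-/

section Moments

open Finset

variable {ι E : Type*} [SeminormedAddCommGroup E] [InnerProductSpace ℝ E] {s : Finset ι} {w : ι → ℝ}

theorem sum_mul_norm_sub_sq_eq_add_norm_sub_sq (hw : ∑ i ∈ s, w i = 1) (v : ι → E) (c : E) :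
    ∑ i ∈ s, w i * ‖v i - c‖ ^ 2 =
      ∑ i ∈ s, w i * ‖v i - ∑ j ∈ s, w j • v j‖ ^ 2 + ‖∑ j ∈ s, w j • v j - c‖ ^ 2 := by
  set m := ∑ j ∈ s, w j • v j with hm
  have expand (i : ι) : w i * ‖v i - c‖ ^ 2 =
      w i * ‖v i - m‖ ^ 2 + 2 * inner ℝ (w i • (v i - m)) (m - c) + w i * ‖m - c‖ ^ 2 := by
    rw [← sub_add_sub_cancel (v i) m c, norm_add_sq_real, real_inner_smul_left]
    ring
  have centered : ∑ i ∈ s, w i • (v i - m) = 0 := by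
    simp only [smul_sub, sum_sub_distrib, ← sum_smul, hw, one_smul, ← hm, sub_self]
  simp only [expand, sum_add_distrib, ← mul_sum, ← sum_inner, ← sum_mul, centered, hw,
    inner_zero_left, mul_zero, add_zero, one_mul]

theorem sum_mul_norm_sub_mean_sq_le (hw : ∑ i ∈ s, w i = 1) (v : ι → E) (c : E) :
    ∑ i ∈ s, w i * ‖v i - ∑ j ∈ s, w j • v j‖ ^ 2 ≤ ∑ i ∈ s, w i * ‖v i - c‖ ^ 2 := by
  rw [sum_mul_norm_sub_sq_eq_add_norm_sub_sq hw v c]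
  exact le_add_of_nonneg_right (sq_nonneg _)

theorem sum_mul_exp_le_one_add_add_sq (hw₀ : ∀ i ∈ s, 0 ≤ w i) (hw : ∑ i ∈ s, w i = 1) {X : ι → ℝ}
    (hX : ∀ i ∈ s, |X i| ≤ 1) :
    ∑ i ∈ s, w i * Real.exp (X i) ≤ 1 + ∑ i ∈ s, w i * X i + ∑ i ∈ s, w i * X i ^ 2 := by
  have exp_le (i : ι) (hi : i ∈ s) : Real.exp (X i) ≤ 1 + X i + X i ^ 2 := by
    linarith [(abs_le.1 (Real.abs_exp_sub_one_sub_id_le (hX i hi))).2]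
  calc ∑ i ∈ s, w i * Real.exp (X i)
      ≤ ∑ i ∈ s, w i * (1 + X i + X i ^ 2) :=
        sum_le_sum fun i hi => mul_le_mul_of_nonneg_left (exp_le i hi) (hw₀ i hi)
    _ = 1 + ∑ i ∈ s, w i * X i + ∑ i ∈ s, w i * X i ^ 2 := by
        simp only [mul_add, mul_one, sum_add_distrib, hw]

theorem sum_mul_exp_neg_mul_le_of_margin (hw₀ : ∀ i ∈ s, 0 ≤ w i) (hw : ∑ i ∈ s, w i = 1)
    {D : ι → ℝ} {β B C r lam : ℝ} (hβ : 0 ≤ β) (hβB : β * B ≤ 1) (hβC : β * (2 * C ^ 2) ≤ lam)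
    (hDB : ∀ i ∈ s, |D i| ≤ B) (hDC : ∀ i ∈ s, |D i| ≤ C * r)
    (hmargin : lam * r ^ 2 ≤ ∑ i ∈ s, w i * D i) :
    ∑ i ∈ s, w i * Real.exp (-β * D i) ≤ 1 - β * lam / 2 * r ^ 2 := by
  have abs_le_one (i : ι) (hi : i ∈ s) : |-β * D i| ≤ 1 := by
    rw [abs_mul, abs_neg, abs_of_nonneg hβ]
    exact (mul_le_mul_of_nonneg_left (hDB i hi) hβ).trans hβB
  have second_moment : ∑ i ∈ s, w i * D i ^ 2 ≤ (C * r) ^ 2 :=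
    calc ∑ i ∈ s, w i * D i ^ 2
        ≤ ∑ i ∈ s, w i * (C * r) ^ 2 := sum_le_sum fun i hi =>
          mul_le_mul_of_nonneg_left (sq_le_sq.2 ((hDC i hi).trans (le_abs_self _))) (hw₀ i hi)
      _ = (C * r) ^ 2 := by rw [← sum_mul, hw, one_mul]
  calc ∑ i ∈ s, w i * Real.exp (-β * D i)
      ≤ 1 + ∑ i ∈ s, w i * (-β * D i) + ∑ i ∈ s, w i * (-β * D i) ^ 2 :=
        sum_mul_exp_le_one_add_add_sq hw₀ hw abs_le_one
    _ = 1 - β * ∑ i ∈ s, w i * D i + β ^ 2 * ∑ i ∈ s, w i * D i ^ 2 := by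
        simp only [mul_pow, neg_sq, mul_left_comm (w _), ← mul_sum]
        ring
    _ ≤ 1 - β * (lam * r ^ 2) + β ^ 2 * (C * r) ^ 2 := by gcongr
    _ = 1 - β * lam * r ^ 2 + β * (β * (2 * C ^ 2)) / 2 * r ^ 2 := by ring
    _ ≤ 1 - β * lam * r ^ 2 + β * lam / 2 * r ^ 2 := by gcongr
    _ = 1 - β * lam / 2 * r ^ 2 := by ring

end Moments

section Update

open Finset

variable {G : Type*} [Fintype G]

/-- The exponential-weights posterior: the prior weights `π` are multiplied by the exponentials of
`-β` times the losses `ℓ` incurred on the observed answer, and then renormalized. -/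
noncomputable def expWeightsPosterior (β : ℝ) (π ℓ : G → ℝ) (g : G) : ℝ :=
  π g * Real.exp (-β * ℓ g) / ∑ h, π h * Real.exp (-β * ℓ h)

theorem one_div_expWeightsPosterior (β : ℝ) (π ℓ : G → ℝ) (g : G) :
    1 / expWeightsPosterior β π ℓ g =
      (∑ h, π h * Real.exp (-β * (ℓ h - ℓ g))) * (1 / π g) := by
  simp only [expWeightsPosterior, mul_sub, Real.exp_sub, ← mul_div_assoc (π _), ← sum_div]
  rw [one_div_div, div_mul_div_comm, mul_one, mul_comm (π g)]

theorem sum_mul_one_div_expWeightsPosterior {Y : Type*} [Fintype Y] (β : ℝ) (π : G → ℝ)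
    (ℓ : G → Y → ℝ) (η : Y → ℝ) (g : G) :
    ∑ y, η y * (1 / expWeightsPosterior β π (ℓ · y) g) =
      (∑ h, π h * ∑ y, η y * Real.exp (-β * (ℓ h y - ℓ g y))) * (1 / π g) := by
  simp only [one_div_expWeightsPosterior, ← mul_assoc, ← sum_mul]
  simp only [mul_sum, mul_left_comm (η _)]
  rw [sum_comm]

theorem stmt_9_general {Y E : Type*} [Fintype Y] [SeminormedAddCommGroup E]
    [InnerProductSpace ℝ E]
    {π : G → ℝ} (hπnn : ∀ g, 0 ≤ π g) (hπsum : ∑ g, π g = 1) {gs : G} (hgs : 0 < π gs)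
    {v : G → E} {ℓ : G → Y → ℝ} {B C : ℝ} (hB : 0 < B) (hC : 0 < C)
    (hbound : ∀ g y, |ℓ g y - ℓ gs y| ≤ B)
    (hlip : ∀ g y, |ℓ g y - ℓ gs y| ≤ C * ‖v g - v gs‖)
    {η : Y → ℝ} (hηnn : ∀ y, 0 ≤ η y) (hηsum : ∑ y, η y = 1) {lam : ℝ} (hlam : 0 < lam)
    (hmargin : ∀ g, lam * ‖v g - v gs‖ ^ 2 ≤ (∑ y, η y * ℓ g y) - ∑ y, η y * ℓ gs y)
    {γ : ℝ} (hvar : γ ≤ ∑ g, π g * ‖v g - ∑ g', π g' • v g'‖ ^ 2)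
    {β : ℝ} (hβ₀ : 0 < β) (hβ : β ≤ min (lam / (2 * C ^ 2)) (1 / B)) :
    ∑ y, η y * (1 / expWeightsPosterior β π (ℓ · y) gs) ≤
      (1 - β * γ * lam / 2) * (1 / π gs) := by
  obtain ⟨hβC, hβB⟩ := le_min_iff.1 hβ
  rw [le_div_iff₀ (by positivity)] at hβC hβB
  have drift (g : G) : ∑ y, η y * Real.exp (-β * (ℓ g y - ℓ gs y)) ≤
      1 - β * lam / 2 * ‖v g - v gs‖ ^ 2 :=
    sum_mul_exp_neg_mul_le_of_margin (fun y _ => hηnn y) hηsum hβ₀.le hβB hβC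
      (fun y _ => hbound g y) (fun y _ => hlip g y)
      (by simpa only [mul_sub, sum_sub_distrib] using hmargin g)
  rw [sum_mul_one_div_expWeightsPosterior]
  refine mul_le_mul_of_nonneg_right ?_ (one_div_nonneg.2 hgs.le)
  calc ∑ g, π g * ∑ y, η y * Real.exp (-β * (ℓ g y - ℓ gs y))
      ≤ ∑ g, π g * (1 - β * lam / 2 * ‖v g - v gs‖ ^ 2) :=
        sum_le_sum fun g _ => mul_le_mul_of_nonneg_left (drift g) (hπnn g)
    _ = 1 - β * lam / 2 * ∑ g, π g * ‖v g - v gs‖ ^ 2 := by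
        simp only [mul_sub, mul_one, sum_sub_distrib, hπsum, mul_left_comm (π _), ← mul_sum]
    _ ≤ 1 - β * lam / 2 * γ := by
        gcongr
        exact hvar.trans (sum_mul_norm_sub_mean_sq_le hπsum v (v gs))
    _ = 1 - β * γ * lam / 2 := by ring

end Update

/-- One-step drift bound for structural QBC under a general bounded Lipschitz loss
satisfying the quadratic-margin noise condition: if `0 < β ≤ min(λ/(2C²), 1/B)` and the
posterior variance of the prediction on the queried atom is at least `γ`, then the
expected reciprocal posterior mass of the target after the exponential-weight update is
at most `(1 - β·γ·λ/2)` times its previous value. -/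
theorem stmt_9 {G Y : Type*} [Fintype G] [Nonempty G] [Fintype Y] (d : ℕ)
    (π : G → ℝ) (hπnn : ∀ g, 0 ≤ π g) (hπsum : ∑ g, π g = 1)
    (gs : G) (hgs : 0 < π gs)
    (v : G → EuclideanSpace ℝ (Fin d))
    (ℓ : EuclideanSpace ℝ (Fin d) → Y → ℝ)
    (B C : ℝ) (hB : 0 < B) (hC : 0 < C)
    (hℓnn : ∀ g y, 0 ≤ ℓ (v g) y) (hℓB : ∀ g y, ℓ (v g) y ≤ B)
    (hlip : ∀ g g' y, |ℓ (v g) y - ℓ (v g') y| ≤ C * ‖v g - v g'‖)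
    (η : Y → ℝ) (hηnn : ∀ y, 0 ≤ η y) (hηsum : ∑ y, η y = 1)
    (lam : ℝ) (hlam : 0 < lam)
    (hmargin : ∀ g, lam * ‖v g - v gs‖ ^ 2 ≤
      (∑ y, η y * ℓ (v g) y) - (∑ y, η y * ℓ (v gs) y))
    (γ : ℝ) (hγnn : 0 ≤ γ)
    (hvar : γ ≤ ∑ g, π g * ‖v g - ∑ g', π g' • v g'‖ ^ 2)
    (β : ℝ) (hβ0 : 0 < β) (hβ : β ≤ min (lam / (2 * C ^ 2)) (1 / B))
    (π' : Y → G → ℝ)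
    (hπ' : ∀ y g, π' y g =
      π g * Real.exp (-β * ℓ (v g) y) / (∑ h, π h * Real.exp (-β * ℓ (v h) y))) :
    ∑ y, η y * (1 / π' y gs) ≤ (1 - β * γ * lam / 2) * (1 / π gs) := by
  obtain rfl : π' = fun y => expWeightsPosterior β π (fun g => ℓ (v g) y) := funext₂ hπ'
  exact stmt_9_general (ℓ := fun g y => ℓ (v g) y) hπnn hπsum hgs hB hC
    (fun g y => abs_sub_le_of_nonneg_of_le (hℓnn g y) (hℓB g y) (hℓnn gs y) (hℓB gs y))
    (fun g y => hlip g gs y) hηnn hηsum hlam hmargin hvar hβ0 hβ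
end

section
/- Let (Ω, F, P) be a probability space with filtration (F_t)_{t≥0}, and let (X_t)_{t≥0} be an adapted process with 0 < X_t ≤ 1 almost surely and X_0 = x_0 a constant in (0,1]. Let 0 < β, λ ≤ 1 with β ≤ λ/2, let s_o, τ ∈ (0,1), and let δ ∈ (0,1). Suppose: (i) e^{−β}·X_{t−1} ≤ X_t ≤ e^{β}·X_{t−1} almost surely for all t ≥ 1; and (ii) for every t ≥ 1, almost surely on the event {X_s ≤ τ for all s < t}, E[1 − X_{t−1}/X_t | F_{t−1}] ≥ β·λ·s_o/2. Then for any integer T ≥ (4/(β·λ·s_o)) · max( ln(1/x_0), (8·e^{β}/(β·λ·s_o)) · ln(1/δ) ), with probability at least 1 − δ there exists t ≤ T with X_t > τ. -/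
open MeasureTheory Filter

/-! While `X` stays at most `τ`, the drift condition `c ≤ E[1 - X_t / X_{t+1} | F_t]` says exactly
that `E[1 / X_{t+1} | F_t] ≤ (1 - c) / X_t`, so the expectation of `1 / X_t` on the event that `X`
has stayed at most `τ` up to time `t` decays like `exp (-c t)`. On that event `1 / X_t ≥ 1 / τ`, so
Markov's inequality bounds its probability by `τ exp (-c t) E[1 / X_0]`. Working with `1 / X_t`
rather than `log X_t` replaces the Azuma–Hoeffding inequality by a first moment bound. -/

section StaysBelow

variable {Ω ι α : Type*} [Preorder ι] [Preorder α] {X : ι → Ω → α} {τ : α}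

/-- The event that the process `X` does not exceed the level `τ` up to and including time `t`. -/
def staysBelow (X : ι → Ω → α) (τ : α) (t : ι) : Set Ω :=
  {ω | ∀ s ≤ t, X s ω ≤ τ}

theorem staysBelow_antitone : Antitone (staysBelow X τ) :=
  fun _ _ hst _ hω u hu => hω u (hu.trans hst)

theorem compl_staysBelow {β : Type*} [LinearOrder β] (X : ι → Ω → β) (τ : β) (t : ι) :
    (staysBelow X τ t)ᶜ = {ω | ∃ s ≤ t, τ < X s ω} := by
  ext ω
  simp [staysBelow]

theorem measurableSet_staysBelow [Countable ι] [TopologicalSpace α] [ClosedIicTopology α]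
    [MeasurableSpace α] [OpensMeasurableSpace α] {mΩ : MeasurableSpace Ω} {F : Filtration ι mΩ}
    (hX : Adapted F X) (t : ι) : MeasurableSet[F t] (staysBelow X τ t) := by
  simp only [staysBelow, Set.ofPred_forall]
  exact .iInter fun s => .iInter fun hst => hX.measurable_le hst measurableSet_Iic

end StaysBelow

section Reciprocal

variable {Ω : Type*} {m mΩ : MeasurableSpace Ω} {μ : Measure Ω} {X Y : Ω → ℝ} {c K τ : ℝ}

theorem integrable_inv_of_mul_le (hK : 0 < K) (hX : Integrable (fun ω => (X ω)⁻¹) μ)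
    (hY : AEMeasurable Y μ) (hpos : ∀ᵐ ω ∂μ, 0 < X ω) (hXY : ∀ᵐ ω ∂μ, K * X ω ≤ Y ω) :
    Integrable (fun ω => (Y ω)⁻¹) μ := by
  refine (hX.const_mul K⁻¹).mono' hY.inv.aestronglyMeasurable ?_
  filter_upwards [hpos, hXY] with ω hXω hXYω
  have hKX : 0 < K * X ω := mul_pos hK hXω
  rw [Real.norm_of_nonneg (inv_nonneg.mpr (hKX.le.trans hXYω)), ← mul_inv]
  exact inv_anti₀ hKX hXYω

theorem integrable_inv_of_mul_le_succ {X : ℕ → Ω → ℝ} (hK : 0 < K)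
    (hX0 : Integrable (fun ω => (X 0 ω)⁻¹) μ) (hX : ∀ t, AEMeasurable (X t) μ)
    (hpos : ∀ t, ∀ᵐ ω ∂μ, 0 < X t ω) (hsucc : ∀ t, ∀ᵐ ω ∂μ, K * X t ω ≤ X (t + 1) ω) (t : ℕ) :
    Integrable (fun ω => (X t ω)⁻¹) μ := by
  induction t with
  | zero => exact hX0
  | succ t ih => exact integrable_inv_of_mul_le hK ih (hX _) (hpos t) (hsucc t)

theorem integrable_div_of_mul_le [IsFiniteMeasure μ] (hK : 0 < K) (hX : AEMeasurable X μ)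
    (hY : AEMeasurable Y μ) (hpos : ∀ᵐ ω ∂μ, 0 < X ω) (hXY : ∀ᵐ ω ∂μ, K * X ω ≤ Y ω) :
    Integrable (fun ω => X ω / Y ω) μ := by
  refine .of_bound (hX.div hY).aestronglyMeasurable K⁻¹ ?_
  filter_upwards [hpos, hXY] with ω hXω hXYω
  have hYω : 0 < Y ω := (mul_pos hK hXω).trans_le hXYω
  rw [Real.norm_of_nonneg (div_nonneg hXω.le hYω.le), div_le_iff₀ hYω, ← div_eq_inv_mul]
  exact (le_div_iff₀' hK).mpr hXYω

theorem condExp_one_sub_div [IsFiniteMeasure μ] (hm : m ≤ mΩ) (hX : AEStronglyMeasurable[m] X μ)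
    (hY : Integrable (fun ω => (Y ω)⁻¹) μ) (hXY : Integrable (fun ω => X ω / Y ω) μ) :
    μ[fun ω => 1 - X ω / Y ω | m] =ᵐ[μ] fun ω => 1 - X ω * μ[fun ω => (Y ω)⁻¹ | m] ω := by
  simp only [div_eq_mul_inv] at hXY ⊢
  filter_upwards [condExp_sub (integrable_const 1) hXY m,
    condExp_mul_of_aestronglyMeasurable_left hX hXY hY] with ω hsub hmul
  refine hsub.trans ?_
  rw [Pi.sub_apply, condExp_const hm]
  exact congrArg (1 - ·) hmul

theorem condExp_inv_le_of_le_condExp_one_sub_div [IsFiniteMeasure μ] (hm : m ≤ mΩ)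
    (hX : AEStronglyMeasurable[m] X μ) (hpos : ∀ᵐ ω ∂μ, 0 < X ω)
    (hY : Integrable (fun ω => (Y ω)⁻¹) μ) (hXY : Integrable (fun ω => X ω / Y ω) μ) :
    ∀ᵐ ω ∂μ, c ≤ μ[fun ω' => 1 - X ω' / Y ω' | m] ω →
      μ[fun ω' => (Y ω')⁻¹ | m] ω ≤ (1 - c) * (X ω)⁻¹ := by
  filter_upwards [hpos, condExp_one_sub_div hm hX hY hXY] with ω hXω hdiv hc
  rw [hdiv] at hc
  rw [← div_eq_mul_inv, le_div_iff₀' hXω]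
  linarith

theorem measureReal_le_mul_setIntegral_inv {s : Set Ω} (hs : MeasurableSet s) (hμs : μ s ≠ ⊤)
    (hX : IntegrableOn (fun ω => (X ω)⁻¹) s μ) (hpos : ∀ᵐ ω ∂μ, 0 < X ω) (hle : ∀ ω ∈ s, X ω ≤ τ) :
    μ.real s ≤ τ * ∫ ω in s, (X ω)⁻¹ ∂μ := by
  calc μ.real s = ∫ _ in s, (1 : ℝ) ∂μ := by simp
    _ ≤ ∫ ω in s, τ * (X ω)⁻¹ ∂μ := by
      refine setIntegral_mono_on_ae (integrableOn_const hμs) (hX.const_mul τ) hs ?_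
      filter_upwards [hpos] with ω hXω hω
      rw [← div_eq_mul_inv, one_le_div hXω]
      exact hle ω hω
    _ = τ * ∫ ω in s, (X ω)⁻¹ ∂μ := integral_const_mul ..

end Reciprocal

section Decay

variable {Ω : Type*} {mΩ : MeasurableSpace Ω} {μ : Measure Ω} {F : Filtration ℕ mΩ}

theorem setIntegral_le_pow_mul_of_condExp_le [SigmaFiniteFiltration μ F] {Y : ℕ → Ω → ℝ}
    {B : ℕ → Set Ω} {r : ℝ} (hr : 0 ≤ r) (hB : ∀ t, MeasurableSet[F t] (B t)) (hBanti : Antitone B)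
    (hY : ∀ t, Integrable (Y t) μ) (hY0 : ∀ t, 0 ≤ᵐ[μ] Y t)
    (hstep : ∀ t, ∀ᵐ ω ∂μ, ω ∈ B t → μ[Y (t + 1) | F t] ω ≤ r * Y t ω) (t : ℕ) :
    ∫ ω in B t, Y t ω ∂μ ≤ r ^ t * ∫ ω in B 0, Y 0 ω ∂μ := by
  induction t with
  | zero => simp
  | succ t ih =>
    calc ∫ ω in B (t + 1), Y (t + 1) ω ∂μ
      _ ≤ ∫ ω in B t, Y (t + 1) ω ∂μ :=
        setIntegral_mono_set (hY _).integrableOn (ae_restrict_of_ae (hY0 _))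
          (hBanti t.le_succ).eventuallyLE
      _ = ∫ ω in B t, μ[Y (t + 1) | F t] ω ∂μ := (setIntegral_condExp (F.le t) (hY _) (hB t)).symm
      _ ≤ ∫ ω in B t, r * Y t ω ∂μ :=
        setIntegral_mono_on_ae integrable_condExp.integrableOn ((hY t).const_mul r).integrableOn
          (F.le t _ (hB t)) (hstep t)
      _ = r * ∫ ω in B t, Y t ω ∂μ := integral_const_mul ..
      _ ≤ r * (r ^ t * ∫ ω in B 0, Y 0 ω ∂μ) := mul_le_mul_of_nonneg_left ih hr
      _ = r ^ (t + 1) * ∫ ω in B 0, Y 0 ω ∂μ := by ring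

variable [IsFiniteMeasure μ] {X : ℕ → Ω → ℝ} {c τ : ℝ}

theorem setIntegral_staysBelow_inv_le (hX : Adapted F X) (hpos : ∀ t, ∀ᵐ ω ∂μ, 0 < X t ω)
    (hinv : ∀ t, Integrable (fun ω => (X t ω)⁻¹) μ)
    (hdiv : ∀ t, Integrable (fun ω => X t ω / X (t + 1) ω) μ)
    (hdrift : ∀ t, ∀ᵐ ω ∂μ, ω ∈ staysBelow X τ t →
      c ≤ μ[fun ω' => 1 - X t ω' / X (t + 1) ω' | F t] ω) (t : ℕ) :
    ∫ ω in staysBelow X τ t, (X t ω)⁻¹ ∂μ ≤ Real.exp (-(c * t)) * ∫ ω, (X 0 ω)⁻¹ ∂μ := by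
  have hinv_nonneg (t : ℕ) : 0 ≤ᵐ[μ] fun ω => (X t ω)⁻¹ :=
    (hpos t).mono fun ω hω => inv_nonneg.mpr hω.le
  have hstep (t : ℕ) : ∀ᵐ ω ∂μ, ω ∈ staysBelow X τ t →
      μ[fun ω' => (X (t + 1) ω')⁻¹ | F t] ω ≤ Real.exp (-c) * (X t ω)⁻¹ := by
    filter_upwards [hdrift t, hinv_nonneg t, condExp_inv_le_of_le_condExp_one_sub_div (F.le t)
      (hX t).aestronglyMeasurable (hpos t) (hinv (t + 1)) (hdiv t)] with ω hc hXω hcond hω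
    exact (hcond (hc hω)).trans
      (mul_le_mul_of_nonneg_right (Real.one_sub_le_exp_neg c) hXω)
  calc ∫ ω in staysBelow X τ t, (X t ω)⁻¹ ∂μ
    _ ≤ Real.exp (-c) ^ t * ∫ ω in staysBelow X τ 0, (X 0 ω)⁻¹ ∂μ :=
      setIntegral_le_pow_mul_of_condExp_le (Real.exp_pos _).le (measurableSet_staysBelow hX)
        staysBelow_antitone hinv hinv_nonneg hstep t
    _ ≤ Real.exp (-c) ^ t * ∫ ω, (X 0 ω)⁻¹ ∂μ :=
      mul_le_mul_of_nonneg_left (setIntegral_le_integral (hinv 0) (hinv_nonneg 0)) (by positivity)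
    _ = Real.exp (-(c * t)) * ∫ ω, (X 0 ω)⁻¹ ∂μ := by
      rw [← Real.exp_nat_mul, mul_neg, mul_comm c]

theorem measureReal_staysBelow_le (hX : Adapted F X) (hpos : ∀ t, ∀ᵐ ω ∂μ, 0 < X t ω)
    (hinv : ∀ t, Integrable (fun ω => (X t ω)⁻¹) μ)
    (hdiv : ∀ t, Integrable (fun ω => X t ω / X (t + 1) ω) μ) (hτ : 0 ≤ τ)
    (hdrift : ∀ t, ∀ᵐ ω ∂μ, ω ∈ staysBelow X τ t →
      c ≤ μ[fun ω' => 1 - X t ω' / X (t + 1) ω' | F t] ω) (t : ℕ) :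
    μ.real (staysBelow X τ t) ≤ τ * (Real.exp (-(c * t)) * ∫ ω, (X 0 ω)⁻¹ ∂μ) :=
  (measureReal_le_mul_setIntegral_inv (F.le t _ (measurableSet_staysBelow hX t))
    (measure_ne_top μ _) (hinv t).integrableOn (hpos t) fun _ hω => hω t le_rfl).trans
    (mul_le_mul_of_nonneg_left (setIntegral_staysBelow_inv_le hX hpos hinv hdiv hdrift t) hτ)

end Decay

theorem add_le_half_mul_of_four_div_mul_max_le {a k x y t : ℝ} (ha : 0 < a) (hk : 1 ≤ k)
    (hy : 0 ≤ y) (h : 4 / a * max x (k * y) ≤ t) : x + y ≤ a / 2 * t := by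
  have hmax : 4 * max x (k * y) ≤ t * a := by rwa [div_mul_eq_mul_div, div_le_iff₀ ha] at h
  have hx : x ≤ max x (k * y) := le_max_left ..
  have hy' : y ≤ max x (k * y) := (le_mul_of_one_le_left hy hk).trans (le_max_right ..)
  linarith

theorem log_mul_inv_div_le {τ x δ : ℝ} (hτ : 0 < τ) (hτ1 : τ ≤ 1) (hx : 0 < x) (hδ : 0 < δ) :
    Real.log (τ * x⁻¹ / δ) ≤ Real.log (1 / x) + Real.log (1 / δ) := by
  rw [← Real.log_mul (by positivity) (by positivity), div_mul_div_comm, one_mul, mul_div_assoc,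
    inv_eq_one_div, div_div]
  exact Real.log_le_log (by positivity) (mul_le_of_le_one_left (by positivity) hτ1)

theorem stmt_14_general {Ω : Type*} {mΩ : MeasurableSpace Ω} (P : Measure Ω)
    [IsProbabilityMeasure P] (F : Filtration ℕ mΩ) (X : ℕ → Ω → ℝ) (hadp : Adapted F X)
    (hpos : ∀ t, ∀ᵐ ω ∂P, 0 < X t ω) (hinv : ∀ t, Integrable (fun ω => (X t ω)⁻¹) P)
    (hdiv : ∀ t, Integrable (fun ω => X t ω / X (t + 1) ω) P)
    (c τ δ : ℝ) (hτ : 0 ≤ τ) (hδ : 0 < δ)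
    (hdrift : ∀ t, ∀ᵐ ω ∂P, (∀ s ≤ t, X s ω ≤ τ) →
      c ≤ P[fun ω' => 1 - X t ω' / X (t + 1) ω' | F t] ω)
    (T : ℕ) (hT : Real.log (τ * (∫ ω, (X 0 ω)⁻¹ ∂P) / δ) ≤ c * T) :
    ENNReal.ofReal (1 - δ) ≤ P {ω | ∃ t ≤ T, τ < X t ω} := by
  have htail : P.real (staysBelow X τ T) ≤ δ := by
    have hexp : τ * (∫ ω, (X 0 ω)⁻¹ ∂P) ≤ Real.exp (c * T) * δ :=
      (div_le_iff₀ hδ).mp ((Real.le_exp_log _).trans (Real.exp_le_exp.mpr hT))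
    calc P.real (staysBelow X τ T)
      _ ≤ τ * (Real.exp (-(c * T)) * ∫ ω, (X 0 ω)⁻¹ ∂P) :=
        measureReal_staysBelow_le hadp hpos hinv hdiv hτ hdrift T
      _ = Real.exp (-(c * T)) * (τ * ∫ ω, (X 0 ω)⁻¹ ∂P) := by ring
      _ ≤ Real.exp (-(c * T)) * (Real.exp (c * T) * δ) := by gcongr
      _ = δ := by rw [← mul_assoc, ← Real.exp_add, neg_add_cancel, Real.exp_zero, one_mul]
  rw [← compl_staysBelow, ← ofReal_measureReal,
    probReal_compl_eq_one_sub (F.le T _ (measurableSet_staysBelow hadp T))]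
  exact ENNReal.ofReal_le_ofReal (sub_le_sub_left htail 1)

/-- Convergence rate for structural QBC under 0-1 loss with Massart noise: if each update
changes the posterior mass of the target by a factor between `e^{-β}` and `e^{β}`, and
while the posterior mass has stayed at most `τ` the expected one-step drift
`E[1 − X_{t-1}/X_t | F_{t-1}]` is at least `β·λ·s_o/2`, then for any
`T ≥ (4/(βλs_o)) · max(ln(1/x_0), (8e^β/(βλs_o))·ln(1/δ))`, with probability at least
`1 − δ` the posterior mass exceeds `τ` by time `T`. -/
theorem stmt_14 {Ω : Type*} {mΩ : MeasurableSpace Ω} (P : Measure Ω) [IsProbabilityMeasure P]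
    (F : Filtration ℕ mΩ) (X : ℕ → Ω → ℝ) (hadp : Adapted F X)
    (hbound : ∀ t, ∀ᵐ ω ∂P, 0 < X t ω ∧ X t ω ≤ 1)
    (x0 : ℝ) (hx0 : x0 ∈ Set.Ioc (0 : ℝ) 1) (hX0 : ∀ ω, X 0 ω = x0)
    (β lam sₒ τ δ : ℝ)
    (hβ : 0 < β ∧ β ≤ 1) (hlam : 0 < lam ∧ lam ≤ 1) (hβlam : β ≤ lam / 2)
    (hsₒ : sₒ ∈ Set.Ioo (0 : ℝ) 1) (hτ : τ ∈ Set.Ioo (0 : ℝ) 1) (hδ : δ ∈ Set.Ioo (0 : ℝ) 1)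
    (hratio : ∀ t : ℕ, 1 ≤ t → ∀ᵐ ω ∂P,
      Real.exp (-β) * X (t - 1) ω ≤ X t ω ∧ X t ω ≤ Real.exp β * X (t - 1) ω)
    (hdrift : ∀ t : ℕ, 1 ≤ t → ∀ᵐ ω ∂P,
      (∀ s < t, X s ω ≤ τ) →
        β * lam * sₒ / 2 ≤ (P[fun ω' => 1 - X (t - 1) ω' / X t ω' | F (t - 1)]) ω)
    (T : ℕ)
    (hT : (4 / (β * lam * sₒ)) *
        max (Real.log (1 / x0)) ((8 * Real.exp β / (β * lam * sₒ)) * Real.log (1 / δ)) ≤ T) :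
    ENNReal.ofReal (1 - δ) ≤ P {ω | ∃ t ≤ T, τ < X t ω} := by
  have hpos (t : ℕ) : ∀ᵐ ω ∂P, 0 < X t ω := (hbound t).mono fun _ hω => hω.1
  have hlower (t : ℕ) : ∀ᵐ ω ∂P, Real.exp (-β) * X t ω ≤ X (t + 1) ω :=
    (hratio (t + 1) t.succ_pos).mono fun _ hω => hω.1
  have hmeas (t : ℕ) : AEMeasurable (X t) P := hadp.measurable.aemeasurable
  have hrate : 1 ≤ 8 * Real.exp β / (β * lam * sₒ) := by
    have hle : β * lam * sₒ ≤ 1 :=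
      mul_le_one₀ (mul_le_one₀ hβ.2 hlam.1.le hlam.2) hsₒ.1.le hsₒ.2.le
    rw [one_le_div (mul_pos (mul_pos hβ.1 hlam.1) hsₒ.1)]
    linarith [Real.one_le_exp hβ.1.le]
  refine stmt_14_general P F X hadp hpos
    (integrable_inv_of_mul_le_succ (Real.exp_pos _) (by simp [hX0]) hmeas hpos hlower)
    (fun t => integrable_div_of_mul_le (Real.exp_pos _) (hmeas t) (hmeas _) (hpos t) (hlower t))
    (β * lam * sₒ / 2) τ δ hτ.1.le hδ.1 (fun t => ?_) T ?_
  · simpa only [Nat.lt_succ_iff, Nat.add_sub_cancel] using hdrift (t + 1) t.succ_pos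
  · simp only [hX0, integral_const, probReal_univ, one_smul]
    exact (log_mul_inv_div_le hτ.1 hτ.2.le hx0.1 hδ.1).trans
      (add_le_half_mul_of_four_div_mul_max_le (mul_pos (mul_pos hβ.1 hlam.1) hsₒ.1) hrate
        (Real.log_nonneg ((one_le_div hδ.1).mpr hδ.2.le)) hT)
end

section
/- Fix p ≥ 1 and points x, y ∈ [0,1]^p. Let I be uniformly distributed on {1,…,p} and, independently, let V be uniformly distributed on [0,1]. Then the probability that the axis-parallel cut (I, V) separates x and y — i.e., that exactly one of x_I ≤ V and y_I ≤ V holds — equals ‖x − y‖₁ / p, where ‖x − y‖₁ = Σ_{i=1}^p |x_i − y_i|. -/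
open MeasureTheory

/-!
On each coordinate `i`, the thresholds separating `x` and `y` form a half-open interval of length
`|x i - y i|`; by Tonelli, averaging these lengths over the coordinates gives the probability.
-/

/-- The axis-parallel cuts `(i, v)` that put `x` and `y` into different clusters, a cut being
encoded by its coordinate `i` and its threshold `v`. -/
def separatingCuts {ι α : Type*} [LE α] (x y : ι → α) : Set (ι × α) :=
  {iv | Xor (x iv.1 ≤ iv.2) (y iv.1 ≤ iv.2)}

theorem setOf_xor_le_eq_Ico {α : Type*} [LinearOrder α] (a b : α) :
    {v | Xor (a ≤ v) (b ≤ v)} = Set.Ico (min a b) (max a b) := by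
  ext v
  simp only [Set.mem_ofPred_eq, Set.mem_Ico, xor_iff_or_and_not_and, ← min_le_iff,
    ← max_le_iff, not_le]

theorem volume_restrict_Ico_min_max {s : Set ℝ} [hs : s.OrdConnected] {a b : ℝ}
    (ha : a ∈ s) (hb : b ∈ s) :
    volume.restrict s (Set.Ico (min a b) (max a b)) = ENNReal.ofReal |a - b| := by
  have Ico_subset : Set.Ico (min a b) (max a b) ⊆ s :=
    Set.Ico_subset_Icc_self.trans (hs.uIcc_subset ha hb)
  rw [Measure.restrict_eq_self _ Ico_subset, Real.volume_Ico, max_sub_min_eq_abs']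

namespace separatingCuts

theorem preimage_mk {ι α : Type*} [LinearOrder α] (x y : ι → α) (i : ι) :
    Prod.mk i ⁻¹' separatingCuts x y = Set.Ico (min (x i) (y i)) (max (x i) (y i)) :=
  setOf_xor_le_eq_Ico (x i) (y i)

variable {ι : Type*} [Countable ι] [MeasurableSpace ι] [MeasurableSingletonClass ι]

section LinearOrder

variable {α : Type*} [LinearOrder α] [TopologicalSpace α] [OrderClosedTopology α]
  [MeasurableSpace α] [OpensMeasurableSpace α]

protected theorem measurableSet (x y : ι → α) : MeasurableSet (separatingCuts x y) :=
  measurableSet_setOfPred.2 <| measurable_from_prod_countable_right fun i =>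
    measurableSet_setOfPred.1 (setOf_xor_le_eq_Ico (x i) (y i) ▸ measurableSet_Ico)

theorem prod_apply (ν : Measure ι) (μ : Measure α) [SFinite μ] (x y : ι → α) :
    ν.prod μ (separatingCuts x y) = ∫⁻ i, μ (Set.Ico (min (x i) (y i)) (max (x i) (y i))) ∂ν := by
  simp only [Measure.prod_apply (separatingCuts.measurableSet x y), preimage_mk]

end LinearOrder

theorem prod_volume_restrict_apply (ν : Measure ι) {s : Set ℝ} [s.OrdConnected] {x y : ι → ℝ}
    (hx : ∀ i, x i ∈ s) (hy : ∀ i, y i ∈ s) :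
    ν.prod (volume.restrict s) (separatingCuts x y) =
      ∫⁻ i, ENNReal.ofReal |x i - y i| ∂ν := by
  simp only [prod_apply, volume_restrict_Ico_min_max (hx _) (hy _)]

end separatingCuts

theorem lintegral_inv_card_smul_count_ofReal {ι : Type*} [Fintype ι] [Nonempty ι]
    [MeasurableSpace ι] [MeasurableSingletonClass ι] {f : ι → ℝ} (hf : ∀ i, 0 ≤ f i) :
    ∫⁻ i, ENNReal.ofReal (f i) ∂((Fintype.card ι : ENNReal)⁻¹ • (Measure.count : Measure ι)) =
      ENNReal.ofReal ((∑ i, f i) / Fintype.card ι) := by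
  have card_pos : (0 : ℝ) < Fintype.card ι := Nat.cast_pos.2 Fintype.card_pos
  rw [lintegral_smul_measure, lintegral_count, tsum_fintype, smul_eq_mul,
    ENNReal.ofReal_div_of_pos card_pos, ENNReal.ofReal_sum_of_nonneg fun i _ => hf i,
    ENNReal.ofReal_natCast, ENNReal.div_eq_inv_mul]

theorem stmt_17_general {ι : Type*} [Fintype ι] [Nonempty ι] [MeasurableSpace ι]
    [MeasurableSingletonClass ι] {s : Set ℝ} [s.OrdConnected] {x y : ι → ℝ}
    (hx : ∀ i, x i ∈ s) (hy : ∀ i, y i ∈ s) :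
    (((Fintype.card ι : ENNReal)⁻¹ • (Measure.count : Measure ι)).prod (volume.restrict s))
        (separatingCuts x y) =
      ENNReal.ofReal ((∑ i, |x i - y i|) / Fintype.card ι) := by
  rw [separatingCuts.prod_volume_restrict_apply _ hx hy,
    lintegral_inv_card_smul_count_ofReal fun i => abs_nonneg (x i - y i)]

/-- For fixed `x, y ∈ [0,1]^p`, a uniformly random axis-parallel cut `(I, V)` — with `I`
uniform on `{1,…,p}` and `V` uniform on `[0,1]`, independent — separates `x` and `y`
(exactly one of `x_I ≤ V`, `y_I ≤ V` holds) with probability `‖x − y‖₁ / p`. -/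
theorem stmt_17 (p : ℕ) (hp : 1 ≤ p) (x y : Fin p → ℝ)
    (hx : ∀ i, x i ∈ Set.Icc (0 : ℝ) 1) (hy : ∀ i, y i ∈ Set.Icc (0 : ℝ) 1) :
    (((p : ENNReal)⁻¹ • (Measure.count : Measure (Fin p))).prod
        ((volume : Measure ℝ).restrict (Set.Icc 0 1)))
      {iv : Fin p × ℝ | Xor' (x iv.1 ≤ iv.2) (y iv.1 ≤ iv.2)} =
      ENNReal.ofReal ((∑ i, |x i - y i|) / p) := by
  have : Nonempty (Fin p) := Fin.pos_iff_nonempty.1 hp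
  simpa only [Fintype.card_fin] using! stmt_17_general hx hy
end

section
/- Let p ≥ 1 and let X and Y be independent random vectors, each uniformly distributed on the cube [0,1]^p. Then E[ 2·(‖X − Y‖₁/p)·(1 − ‖X − Y‖₁/p) ] = 4/9 − 1/(9p), and in particular this expectation is at least 1/3. -/
open MeasureTheory ProbabilityTheory

/-!
Write `A` for the average of the coordinate distances `Dᵢ = |Xᵢ - Yᵢ|`, so that `‖X - Y‖₁ / p = A`.
Since `E[A²] = E[A]² + Var A`, the expected uncertainty is
`E[2 A (1 - A)] = 2 E[A] (1 - E[A]) - 2 Var A`.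
The pairs `(Xᵢ, Yᵢ)` are pairwise independent and uniform on the unit square, where
`E|x - y|ⁿ = 2 / ((n + 1) (n + 2))`; hence `E[Dᵢ] = 1/3` and `Var Dᵢ = 1/6 - 1/9 = 1/18`, which give
`E[A] = 1/3` and `Var A = 1/(18 p)`.
-/

section Average

variable {Ω ι : Type*} [MeasurableSpace Ω] {P : Measure Ω}

lemma integral_two_mul_mul_one_sub [IsProbabilityMeasure P] {A : Ω → ℝ} (hA : MemLp A 2 P) :
    ∫ ω, 2 * A ω * (1 - A ω) ∂P = 2 * P[A] * (1 - P[A]) - 2 * Var[A; P] := by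
  have hA_int : Integrable A P := hA.integrable one_le_two
  calc ∫ ω, 2 * A ω * (1 - A ω) ∂P = ∫ ω, (2 * A ω - 2 * A ω ^ 2) ∂P := by
        congr with ω; ring
    _ = 2 * P[A] - 2 * P[A ^ 2] := by
        rw [integral_sub (hA_int.const_mul 2) (hA.integrable_sq.const_mul 2),
          integral_const_mul, integral_const_mul]
        rfl
    _ = 2 * P[A] * (1 - P[A]) - 2 * Var[A; P] := by
        rw [variance_eq_sub hA]; ring

variable [Fintype ι] {D : ι → Ω → ℝ}

lemma integral_sum_div_card [Nonempty ι] {m : ℝ} (hD : ∀ i, Integrable (D i) P)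
    (hmean : ∀ i, P[D i] = m) :
    ∫ ω, (∑ i, D i ω) / Fintype.card ι ∂P = m := by
  rw [integral_div, integral_finsetSum _ fun i _ ↦ hD i, Finset.sum_congr rfl fun i _ ↦ hmean i,
    Finset.sum_const, Finset.card_univ, nsmul_eq_mul]
  exact mul_div_cancel_left₀ m (Nat.cast_ne_zero.2 Fintype.card_ne_zero)

lemma variance_sum_div_card {v : ℝ} (hD : ∀ i, MemLp (D i) 2 P)
    (hindep : Pairwise fun i j ↦ IndepFun (D i) (D j) P) (hvar : ∀ i, Var[D i; P] = v) :
    Var[fun ω ↦ (∑ i, D i ω) / Fintype.card ι; P] = v / Fintype.card ι := by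
  have hsum : Var[fun ω ↦ ∑ i, D i ω; P] = Fintype.card ι * v := by
    have := IndepFun.variance_sum (s := Finset.univ) (fun i _ ↦ hD i) (hindep.set_pairwise _)
    simpa [hvar, Finset.sum_fn] using this
  simp only [div_eq_mul_inv]
  rw [variance_mul_const, hsum]
  field

end Average

section JointLaw

variable {Ω ι : Type*} [MeasurableSpace Ω] [Fintype ι] {P : Measure Ω}

lemma hasLaw_pi_prodMk_of_indepFun {α β : Type*} [MeasurableSpace α] [MeasurableSpace β]
    [IsFiniteMeasure P] {μ : ι → Measure α} {ν : ι → Measure β} [∀ i, SigmaFinite (μ i)]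
    [∀ i, SigmaFinite (ν i)] {X : Ω → ι → α} {Y : Ω → ι → β} (hX : HasLaw X (Measure.pi μ) P)
    (hY : HasLaw Y (Measure.pi ν) P) (hXY : IndepFun X Y P) :
    HasLaw (fun ω i ↦ (X ω i, Y ω i)) (Measure.pi fun i ↦ (μ i).prod (ν i)) P :=
  (measurePreserving_arrowProdEquivProdArrow α β ι μ ν).symm.fun_comp_hasLaw (hXY.hasLaw_prod hX hY)

variable {E : ι → Type*} [∀ i, MeasurableSpace (E i)] {μ : ∀ i, Measure (E i)}
  [∀ i, IsProbabilityMeasure (μ i)] {Z : Ω → ∀ i, E i}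

lemma hasLaw_eval_of_hasLaw_pi (hZ : HasLaw Z (Measure.pi μ) P) (i : ι) :
    HasLaw (fun ω ↦ Z ω i) (μ i) P :=
  (measurePreserving_eval μ i).fun_comp_hasLaw hZ

lemma iIndepFun_eval_of_hasLaw_pi (hZ : HasLaw Z (Measure.pi μ) P) :
    iIndepFun (fun i ω ↦ Z ω i) P :=
  have := hZ.isProbabilityMeasure
  (iIndepFun_iff_hasLaw_pi_pi (hasLaw_eval_of_hasLaw_pi hZ)).2 hZ

end JointLaw

section AbsSubMoments

variable {a b : ℝ}

lemma intervalIntegral_abs_sub_pow {x : ℝ} (hx : x ∈ Set.Icc a b) (n : ℕ) :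
    ∫ y in a..b, |x - y| ^ n = ((x - a) ^ (n + 1) + (b - x) ^ (n + 1)) / (n + 1) := by
  have hleft : ∫ y in a..x, |x - y| ^ n = (x - a) ^ (n + 1) / (n + 1) := calc
    _ = ∫ y in a..x, (x - y) ^ n := intervalIntegral.integral_congr fun y hy ↦ by
      rw [Set.uIcc_of_le hx.1] at hy
      simp only [abs_of_nonneg (sub_nonneg.2 hy.2)]
    _ = _ := by simp [intervalIntegral.integral_comp_sub_left fun u ↦ u ^ n]
  have hright : ∫ y in x..b, |x - y| ^ n = (b - x) ^ (n + 1) / (n + 1) := calc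
    _ = ∫ y in x..b, (y - x) ^ n := intervalIntegral.integral_congr fun y hy ↦ by
      rw [Set.uIcc_of_le hx.2] at hy
      simp only [abs_sub_comm x y, abs_of_nonneg (sub_nonneg.2 hy.1)]
    _ = _ := by simp [intervalIntegral.integral_comp_sub_right fun u ↦ u ^ n]
  have hint (c d : ℝ) : IntervalIntegrable (fun y ↦ |x - y| ^ n) volume c d :=
    Continuous.intervalIntegrable (by fun_prop) c d
  rw [← intervalIntegral.integral_add_adjacent_intervals (hint a x) (hint x b), hleft, hright,
    add_div]

lemma setIntegral_square_abs_sub_pow (hab : a ≤ b) (n : ℕ) :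
    ∫ z in Set.Icc a b ×ˢ Set.Icc a b, |z.1 - z.2| ^ n =
      2 * (b - a) ^ (n + 2) / ((n + 1) * (n + 2)) := by
  have hint : IntegrableOn (fun z : ℝ × ℝ ↦ |z.1 - z.2| ^ n) (Set.Icc a b ×ˢ Set.Icc a b) :=
    ContinuousOn.integrableOn_compact (isCompact_Icc.prod isCompact_Icc) (by fun_prop)
  calc ∫ z in Set.Icc a b ×ˢ Set.Icc a b, |z.1 - z.2| ^ n
      = ∫ x in Set.Icc a b, ∫ y in Set.Icc a b, |x - y| ^ n := setIntegral_prod _ hint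
    _ = ∫ x in Set.Icc a b, ((x - a) ^ (n + 1) + (b - x) ^ (n + 1)) / (n + 1) :=
      setIntegral_congr_fun measurableSet_Icc fun x hx ↦ by
        simp only [integral_Icc_eq_integral_Ioc, ← intervalIntegral.integral_of_le hab,
          intervalIntegral_abs_sub_pow hx n]
    _ = ∫ x in a..b, ((x - a) ^ (n + 1) + (b - x) ^ (n + 1)) / (n + 1) := by
      rw [integral_Icc_eq_integral_Ioc, intervalIntegral.integral_of_le hab]
    _ = 2 * (b - a) ^ (n + 2) / ((n + 1) * (n + 2)) := by
      rw [intervalIntegral.integral_div, intervalIntegral.integral_add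
        (Continuous.intervalIntegrable (by fun_prop) a b)
        (Continuous.intervalIntegrable (by fun_prop) a b),
        intervalIntegral.integral_comp_sub_right (fun u ↦ u ^ (n + 1)),
        intervalIntegral.integral_comp_sub_left (fun u ↦ u ^ (n + 1))]
      simp only [sub_self, integral_pow, zero_pow (Nat.succ_ne_zero _), Nat.cast_add, Nat.cast_one]
      field

end AbsSubMoments

/-- The uniform distribution on the unit square `[0,1]²`, the joint law of one coordinate of two
independent uniform points of a cube. -/
noncomputable abbrev uniformUnitSquare : Measure (ℝ × ℝ) :=
  volume.restrict (Set.Icc 0 1 ×ˢ Set.Icc 0 1)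

lemma prod_restrict_Icc_eq_uniformUnitSquare :
    ((volume : Measure ℝ).restrict (Set.Icc 0 1)).prod ((volume : Measure ℝ).restrict (Set.Icc 0 1))
      = uniformUnitSquare :=
  Measure.prod_restrict _ _

instance : IsProbabilityMeasure uniformUnitSquare := by
  constructor
  rw [Measure.restrict_apply_univ, Measure.volume_eq_prod, Measure.prod_prod]
  simp

section UniformUnitSquare

variable {Ω : Type*} [MeasurableSpace Ω] {P : Measure Ω} {X Y : Ω → ℝ}

lemma memLp_abs_sub_of_hasLaw_uniformUnitSquare
    (h : HasLaw (fun ω ↦ (X ω, Y ω)) uniformUnitSquare P) (q : ENNReal) :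
    MemLp (fun ω ↦ |X ω - Y ω|) q P := by
  have := h.isProbabilityMeasure
  have hmem : ∀ᵐ ω ∂P, (X ω, Y ω) ∈ Set.Icc (0 : ℝ) 1 ×ˢ Set.Icc (0 : ℝ) 1 :=
    (h.ae_iff (measurableSet_Icc.prod measurableSet_Icc).mem).2
      (ae_restrict_mem (measurableSet_Icc.prod measurableSet_Icc))
  refine MemLp.of_bound ?_ 1 (hmem.mono fun ω ⟨hx, hy⟩ ↦ ?_)
  · exact (by fun_prop : Measurable fun z : ℝ × ℝ ↦ |z.1 - z.2|).comp_aemeasurable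
      h.aemeasurable |>.aestronglyMeasurable
  · simpa using abs_sub_le_of_le_of_le hx.1 hx.2 hy.1 hy.2

lemma integral_abs_sub_pow_of_hasLaw_uniformUnitSquare
    (h : HasLaw (fun ω ↦ (X ω, Y ω)) uniformUnitSquare P) (n : ℕ) :
    ∫ ω, |X ω - Y ω| ^ n ∂P = 2 / ((n + 1) * (n + 2)) := calc
  _ = ∫ z, |z.1 - z.2| ^ n ∂uniformUnitSquare :=
    h.integral_comp (f := fun z ↦ |z.1 - z.2| ^ n)
      (Continuous.aestronglyMeasurable (by fun_prop))
  _ = _ := by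
    rw [setIntegral_square_abs_sub_pow zero_le_one, sub_zero, one_pow, mul_one]

lemma integral_abs_sub_of_hasLaw_uniformUnitSquare
    (h : HasLaw (fun ω ↦ (X ω, Y ω)) uniformUnitSquare P) :
    ∫ ω, |X ω - Y ω| ∂P = 1 / 3 := by
  have := integral_abs_sub_pow_of_hasLaw_uniformUnitSquare h 1
  norm_num at this ⊢
  exact this

lemma variance_abs_sub_of_hasLaw_uniformUnitSquare
    (h : HasLaw (fun ω ↦ (X ω, Y ω)) uniformUnitSquare P) :
    Var[fun ω ↦ |X ω - Y ω|; P] = 1 / 18 := by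
  have := h.isProbabilityMeasure
  rw [variance_eq_sub (memLp_abs_sub_of_hasLaw_uniformUnitSquare h 2),
    integral_abs_sub_of_hasLaw_uniformUnitSquare h]
  simp only [Pi.pow_apply, integral_abs_sub_pow_of_hasLaw_uniformUnitSquare h 2]
  norm_num

end UniformUnitSquare

theorem stmt_18_general {Ω ι : Type*} [MeasurableSpace Ω] [Fintype ι] [Nonempty ι] {P : Measure Ω}
    {X Y : Ω → ι → ℝ} (hlaw : ∀ i, HasLaw (fun ω ↦ (X ω i, Y ω i)) uniformUnitSquare P)
    (hindep : Pairwise fun i j ↦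
      IndepFun (fun ω ↦ (X ω i, Y ω i)) (fun ω ↦ (X ω j, Y ω j)) P) :
    (∫ ω, 2 * ((∑ i, |X ω i - Y ω i|) / Fintype.card ι) *
          (1 - (∑ i, |X ω i - Y ω i|) / Fintype.card ι) ∂P =
        4 / 9 - 1 / (9 * Fintype.card ι)) ∧
      (1 : ℝ) / 3 ≤
        ∫ ω, 2 * ((∑ i, |X ω i - Y ω i|) / Fintype.card ι) *
          (1 - (∑ i, |X ω i - Y ω i|) / Fintype.card ι) ∂P := by
  have := (hlaw (Classical.arbitrary ι)).isProbabilityMeasure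
  have hmemLp (i : ι) : MemLp (fun ω ↦ |X ω i - Y ω i|) 2 P :=
    memLp_abs_sub_of_hasLaw_uniformUnitSquare (hlaw i) 2
  have hdist_indep : Pairwise fun i j ↦
      IndepFun (fun ω ↦ |X ω i - Y ω i|) (fun ω ↦ |X ω j - Y ω j|) P := fun i j hij ↦
    have hdist : Measurable fun z : ℝ × ℝ ↦ |z.1 - z.2| := by fun_prop
    (hindep hij).comp hdist hdist
  have havg_memLp : MemLp (fun ω ↦ (∑ i, |X ω i - Y ω i|) / Fintype.card ι) 2 P := by
    simpa only [div_eq_mul_inv] using (memLp_finsetSum _ fun i _ ↦ hmemLp i).mul_const _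
  have hexpect : ∫ ω, 2 * ((∑ i, |X ω i - Y ω i|) / Fintype.card ι) *
      (1 - (∑ i, |X ω i - Y ω i|) / Fintype.card ι) ∂P = 4 / 9 - 1 / (9 * Fintype.card ι) := by
    rw [integral_two_mul_mul_one_sub havg_memLp,
      integral_sum_div_card (fun i ↦ (hmemLp i).integrable one_le_two)
        fun i ↦ integral_abs_sub_of_hasLaw_uniformUnitSquare (hlaw i),
      variance_sum_div_card hmemLp hdist_indep
        fun i ↦ variance_abs_sub_of_hasLaw_uniformUnitSquare (hlaw i)]
    field
  refine ⟨hexpect, hexpect ▸ ?_⟩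
  have hcard : (1 : ℝ) ≤ Fintype.card ι := Nat.one_le_cast.2 Fintype.card_pos
  have : 1 / (9 * (Fintype.card ι : ℝ)) ≤ 1 / 9 :=
    one_div_le_one_div_of_le (by norm_num) (by linarith)
  linarith

/-- For independent random vectors `X, Y` uniform on the cube `[0,1]^p`, the expected
uncertainty of the atomic query `{X, Y}` under the uniform prior over axis-parallel
bipartitions of `[0,1]^p` satisfies
`E[2·(‖X − Y‖₁/p)·(1 − ‖X − Y‖₁/p)] = 4/9 − 1/(9p) ≥ 1/3`. -/
theorem stmt_18 {Ω : Type*} [MeasurableSpace Ω] (P : Measure Ω) [IsProbabilityMeasure P]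
    (p : ℕ) (hp : 1 ≤ p) (X Y : Ω → Fin p → ℝ)
    (hXm : Measurable X) (hYm : Measurable Y)
    (hX : P.map X = Measure.pi fun _ => (volume : Measure ℝ).restrict (Set.Icc 0 1))
    (hY : P.map Y = Measure.pi fun _ => (volume : Measure ℝ).restrict (Set.Icc 0 1))
    (hindep : IndepFun X Y P) :
    (∫ ω, 2 * ((∑ i, |X ω i - Y ω i|) / p) * (1 - (∑ i, |X ω i - Y ω i|) / p) ∂P =
        4 / 9 - 1 / (9 * p)) ∧
      (1 : ℝ) / 3 ≤
        ∫ ω, 2 * ((∑ i, |X ω i - Y ω i|) / p) * (1 - (∑ i, |X ω i - Y ω i|) / p) ∂P := by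
  have : Nonempty (Fin p) := Fin.pos_iff_nonempty.1 hp
  have hlaw : HasLaw (fun ω i ↦ (X ω i, Y ω i)) (Measure.pi fun _ ↦ uniformUnitSquare) P := by
    simpa only [prod_restrict_Icc_eq_uniformUnitSquare] using
      hasLaw_pi_prodMk_of_indepFun ⟨hXm.aemeasurable, hX⟩ ⟨hYm.aemeasurable, hY⟩ hindep
  simpa only [Fintype.card_fin] using stmt_18_general (hasLaw_eval_of_hasLaw_pi hlaw)
    fun _ _ hij ↦ (iIndepFun_eval_of_hasLaw_pi hlaw).indepFun hij
end

section
/- Let B > 0, let p ∈ (0,1) with z* := ln(p/(1−p)) ∈ [−B, B], and let z ∈ [−B, B]. Define the expected logistic loss L(z) = p·ln(1 + e^{−z}) + (1−p)·ln(1 + e^{z}). Then L(z) − L(z*) ≥ 2·( e^{B}/(1 + e^{B})² )² · (z − z*)². -/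
/-!
The derivative of `L(z) = p·ln(1+e^{−z}) + (1−p)·ln(1+e^{z})` is `σ(z) − p`, where `σ` is the
sigmoid function, and its second derivative is `σ(z)(1 − σ(z))`. On `[−B, B]` the latter is smallest
at the endpoints, where it equals `m = e^B/(1+e^B)²`, so `L` is `m`-strongly convex there and grows
at least like `(m/2)·(z − z*)²` away from its minimizer `z*`. Finally `m ≤ 1/4` gives `2m² ≤ m/2`.
-/

open Filter Real Set Topology

section StrongConvexity

theorem add_modulus_le_of_uniformConvexOn_of_isMinOn {E : Type*} [NormedAddCommGroup E]
    [NormedSpace ℝ E] {s : Set E} {φ : ℝ → ℝ} {f : E → ℝ} {x y : E} (hf : UniformConvexOn s φ f)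
    (hmin : IsMinOn f s x) (hx : x ∈ s) (hy : y ∈ s) : f x + φ ‖x - y‖ ≤ f y := by
  have segment_bound : ∀ t ∈ Ioo (0 : ℝ) 1, f x + (1 - t) * φ ‖x - y‖ ≤ f y := by
    rintro t ⟨ht₀, ht₁⟩
    have h1t : 0 ≤ 1 - t := sub_nonneg.2 ht₁.le
    have convexity := hf.2 hx hy h1t ht₀.le (sub_add_cancel 1 t)
    have minimality := isMinOn_iff.1 hmin _ (hf.1 hx hy h1t ht₀.le (sub_add_cancel 1 t))
    simp only [smul_eq_mul] at convexity
    refine le_of_mul_le_mul_left ?_ ht₀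
    linarith
  have tendsto_bound :
      Tendsto (fun t : ℝ ↦ f x + (1 - t) * φ ‖x - y‖) (𝓝[>] 0) (𝓝 (f x + φ ‖x - y‖)) := by
    refine Tendsto.mono_left (Continuous.tendsto' ?_ _ _ ?_) nhdsWithin_le_nhds
    · fun_prop
    · simp
  exact le_of_tendsto tendsto_bound
    (eventually_of_mem (Ioo_mem_nhdsGT one_pos) segment_bound)

theorem strongConvexOn_of_hasDerivWithinAt2_ge {D : Set ℝ} (hD : Convex ℝ D) {m : ℝ}
    {f f' f'' : ℝ → ℝ} (hf : ContinuousOn f D)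
    (hf' : ∀ x ∈ interior D, HasDerivWithinAt f (f' x) (interior D) x)
    (hf'' : ∀ x ∈ interior D, HasDerivWithinAt f' (f'' x) (interior D) x)
    (hm : ∀ x ∈ interior D, m ≤ f'' x) : StrongConvexOn D m f := by
  simp only [strongConvexOn_iff_convex, norm_eq_abs, sq_abs]
  refine convexOn_of_hasDerivWithinAt2_nonneg (f' := fun x ↦ f' x - m * x)
    (f'' := fun x ↦ f'' x - m) hD (by fun_prop) (fun x hx ↦ ?_) (fun x hx ↦ ?_)
    (fun x hx ↦ sub_nonneg.2 (hm x hx))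
  · refine ((hf' x hx).sub
      (((hasDerivAt_pow 2 x).const_mul (m / 2)).hasDerivWithinAt)).congr_deriv ?_
    ring
  · refine ((hf'' x hx).sub
      (((hasDerivAt_id x).const_mul m).hasDerivWithinAt)).congr_deriv ?_
    ring

end StrongConvexity

section Sigmoid

theorem sigmoid_log_div_one_sub {p : ℝ} (hp : p ∈ Ioo (0 : ℝ) 1) :
    sigmoid (log (p / (1 - p))) = p := by
  obtain ⟨hp₀, hp₁⟩ := hp
  have hq : 0 < 1 - p := sub_pos.2 hp₁
  rw [sigmoid_def, exp_neg, exp_log (div_pos hp₀ hq)]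
  field_simp
  ring

theorem sigmoid_mul_one_sub_sigmoid (x : ℝ) :
    sigmoid x * (1 - sigmoid x) = exp x / (1 + exp x) ^ 2 := by
  rw [sigmoid_def, exp_neg]
  field_simp
  ring

theorem sigmoid_mul_one_sub_sigmoid_le_of_mem_Icc {B x : ℝ} (hx : x ∈ Icc (-B) B) :
    sigmoid B * (1 - sigmoid B) ≤ sigmoid x * (1 - sigmoid x) := by
  have lower : 1 - sigmoid B ≤ sigmoid x := sigmoid_neg B ▸ sigmoid_le hx.1
  have upper : sigmoid x ≤ sigmoid B := sigmoid_le hx.2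
  nlinarith [mul_nonneg (sub_nonneg.2 lower) (sub_nonneg.2 upper)]

theorem hasDerivAt_log_one_add_exp (x : ℝ) :
    HasDerivAt (fun x ↦ log (1 + exp x)) (sigmoid x) x := by
  refine (((hasDerivAt_exp x).const_add 1).log (by positivity)).congr_deriv ?_
  rw [sigmoid_def, exp_neg]
  field_simp
  ring

end Sigmoid

/-- The expected logistic loss of the score `z` when the label is `1` with probability `p` and `-1`
otherwise; `p` may be any real number. -/
noncomputable def expectedLogisticLoss (p z : ℝ) : ℝ :=
  p * log (1 + exp (-z)) + (1 - p) * log (1 + exp z)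

theorem hasDerivAt_expectedLogisticLoss (p z : ℝ) :
    HasDerivAt (expectedLogisticLoss p) (sigmoid z - p) z := by
  have deriv_neg_score : HasDerivAt (fun z ↦ log (1 + exp (-z))) (sigmoid (-z) * -1) z :=
    (hasDerivAt_log_one_add_exp (-z)).comp z (hasDerivAt_neg z)
  refine ((deriv_neg_score.const_mul p).add
    ((hasDerivAt_log_one_add_exp z).const_mul (1 - p))).congr_deriv ?_
  rw [sigmoid_neg]
  ring

theorem strongConvexOn_expectedLogisticLoss {D : Set ℝ} (hD : Convex ℝ D) {m : ℝ}
    (hm : ∀ z ∈ interior D, m ≤ sigmoid z * (1 - sigmoid z)) (p : ℝ) :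
    StrongConvexOn D m (expectedLogisticLoss p) :=
  strongConvexOn_of_hasDerivWithinAt2_ge hD
    (fun z _ ↦ (hasDerivAt_expectedLogisticLoss p z).continuousAt.continuousWithinAt)
    (fun z _ ↦ (hasDerivAt_expectedLogisticLoss p z).hasDerivWithinAt)
    (fun z _ ↦ ((hasDerivAt_sigmoid z).sub_const p).hasDerivWithinAt) hm

theorem convexOn_expectedLogisticLoss (p : ℝ) : ConvexOn ℝ univ (expectedLogisticLoss p) :=
  strongConvexOn_zero.1 <| strongConvexOn_expectedLogisticLoss convex_univ
    (fun z _ ↦ mul_nonneg (sigmoid_nonneg z) (sub_nonneg.2 (sigmoid_le_one z))) p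

theorem isMinOn_expectedLogisticLoss_sigmoid (z : ℝ) :
    IsMinOn (expectedLogisticLoss (sigmoid z)) univ z := by
  refine (convexOn_expectedLogisticLoss _).isMinOn_of_rightDeriv_eq_zero (by simp) ?_
  rw [(hasDerivAt_expectedLogisticLoss _ z).hasDerivWithinAt.derivWithin
    (uniqueDiffWithinAt_Ioi z), sub_self]

theorem expectedLogisticLoss_sigmoid_add_le {B z₀ z : ℝ} (hz₀ : z₀ ∈ Icc (-B) B)
    (hz : z ∈ Icc (-B) B) :
    expectedLogisticLoss (sigmoid z₀) z₀ + sigmoid B * (1 - sigmoid B) / 2 * (z - z₀) ^ 2 ≤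
      expectedLogisticLoss (sigmoid z₀) z := by
  have strongly_convex := strongConvexOn_expectedLogisticLoss (convex_Icc (-B) B)
    (fun _ hx ↦ sigmoid_mul_one_sub_sigmoid_le_of_mem_Icc (interior_subset hx)) (sigmoid z₀)
  have minimizer := (isMinOn_expectedLogisticLoss_sigmoid z₀).on_subset (subset_univ (Icc (-B) B))
  simpa only [norm_eq_abs, sq_abs, sub_sq_comm z₀ z] using
    add_modulus_le_of_uniformConvexOn_of_isMinOn strongly_convex minimizer hz₀ hz

theorem two_mul_sq_sigmoid_mul_one_sub_sigmoid_le (x : ℝ) :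
    2 * (sigmoid x * (1 - sigmoid x)) ^ 2 ≤ sigmoid x * (1 - sigmoid x) / 2 := by
  have nonneg : 0 ≤ sigmoid x * (1 - sigmoid x) :=
    mul_nonneg (sigmoid_nonneg x) (sub_nonneg.2 (sigmoid_le_one x))
  have le_quarter : sigmoid x * (1 - sigmoid x) ≤ 1 / 4 := by
    linarith [sq_nonneg (2 * sigmoid x - 1)]
  nlinarith

/-- The expected logistic loss `L(z) = p·ln(1+e^{−z}) + (1−p)·ln(1+e^{z})`, minimized on
`[−B, B]` at `z* = ln(p/(1−p))`, satisfies the quadratic-margin condition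
`L(z) − L(z*) ≥ 2·(e^B/(1+e^B)²)²·(z − z*)²` for all `z ∈ [−B, B]`. -/
theorem stmt_19 (B : ℝ) (hB : 0 < B) (p : ℝ) (hp : p ∈ Set.Ioo (0 : ℝ) 1)
    (zs : ℝ) (hzs : zs = Real.log (p / (1 - p))) (hzsB : zs ∈ Set.Icc (-B) B)
    (z : ℝ) (hz : z ∈ Set.Icc (-B) B) :
    2 * (Real.exp B / (1 + Real.exp B) ^ 2) ^ 2 * (z - zs) ^ 2 ≤
      (p * Real.log (1 + Real.exp (-z)) + (1 - p) * Real.log (1 + Real.exp z)) -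
        (p * Real.log (1 + Real.exp (-zs)) + (1 - p) * Real.log (1 + Real.exp zs)) := by
  have sigmoid_zs : sigmoid zs = p := hzs ▸ sigmoid_log_div_one_sub hp
  have growth := expectedLogisticLoss_sigmoid_add_le hzsB hz
  rw [sigmoid_zs] at growth
  rw [← sigmoid_mul_one_sub_sigmoid]
  calc 2 * (sigmoid B * (1 - sigmoid B)) ^ 2 * (z - zs) ^ 2
      ≤ sigmoid B * (1 - sigmoid B) / 2 * (z - zs) ^ 2 := by
        gcongr
        exact two_mul_sq_sigmoid_mul_one_sub_sigmoid_le B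
    _ ≤ expectedLogisticLoss p z - expectedLogisticLoss p zs := le_sub_iff_add_le'.2 growth
end
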